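/- Let p be a real polynomial in n variables, homogeneous of degree d ≥ 1, hyperbolic in direction e ∈ ℝⁿ with p(e) > 0, and suppose the hyperbolicity cone Λ₊ is regular. Then for every e' ∈ Λ₊₊: K_{e'}(√(d−1)) ⊆ Λ₊ ⊆ K_{e'}(1). -/

import Mathlib

open scoped BigOperators

/-- The univariate polynomial `t ↦ p(t • e - x)` associated to a multivariate polynomial `p`,
a direction `e` and a point `x`. -/
noncomputable def hypCharPoly {n : ℕ} (p : MvPolynomial (Fin n) ℝ) (e x : Fin n → ℝ) :
    Polynomial ℝ :=
  MvPolynomial.aeval (fun i => Polynomial.C (e i) * Polynomial.X - Polynomial.C (x i)) p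

/-- `p` is a homogeneous polynomial of degree `d`, hyperbolic in direction `e`:
`p(e) ≠ 0` and for every `x` the polynomial `t ↦ p(t • e - x)` has `d` real roots
counted with multiplicity. -/
def IsHyperbolicPoly {n : ℕ} (p : MvPolynomial (Fin n) ℝ) (e : Fin n → ℝ) (d : ℕ) : Prop :=
  p.IsHomogeneous d ∧ MvPolynomial.eval e p ≠ 0 ∧
    ∀ x : Fin n → ℝ, Multiset.card (hypCharPoly p e x).roots = d

/-- The (closed) hyperbolicity cone `Λ₊`: all hyperbolic eigenvalues are nonnegative. -/
def hypConeClosed {n : ℕ} (p : MvPolynomial (Fin n) ℝ) (e : Fin n → ℝ) : Set (Fin n → ℝ) :=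
  {x | ∀ r ∈ (hypCharPoly p e x).roots, (0:ℝ) ≤ r}

/-- The open hyperbolicity cone `Λ₊₊`: all hyperbolic eigenvalues are positive. -/
def hypConeOpen {n : ℕ} (p : MvPolynomial (Fin n) ℝ) (e : Fin n → ℝ) : Set (Fin n → ℝ) :=
  {x | ∀ r ∈ (hypCharPoly p e x).roots, (0:ℝ) < r}

/-- The gradient of `f(x) = -ln p(x)`, namely `g(x)ᵢ = -(∂ᵢ p)(x) / p(x)`. -/
noncomputable def gradNegLog {n : ℕ} (p : MvPolynomial (Fin n) ℝ) (x : Fin n → ℝ) :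
    Fin n → ℝ :=
  fun i => -(MvPolynomial.eval x (MvPolynomial.pderiv i p)) / MvPolynomial.eval x p

/-- The Hessian of `f(x) = -ln p(x)`, namely
`H(x)ᵢⱼ = (∂ᵢp)(x)(∂ⱼp)(x)/p(x)² - (∂ᵢ∂ⱼp)(x)/p(x)`. -/
noncomputable def hessNegLog {n : ℕ} (p : MvPolynomial (Fin n) ℝ) (x : Fin n → ℝ) :
    Matrix (Fin n) (Fin n) ℝ :=
  Matrix.of fun i j =>
    MvPolynomial.eval x (MvPolynomial.pderiv i p) * MvPolynomial.eval x (MvPolynomial.pderiv j p)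
        / (MvPolynomial.eval x p) ^ 2
      - MvPolynomial.eval x (MvPolynomial.pderiv i (MvPolynomial.pderiv j p))
        / MvPolynomial.eval x p

/-- The local inner product `⟨u, v⟩_{e'} = uᵀ H(e') v`. -/
noncomputable def localIP {n : ℕ} (p : MvPolynomial (Fin n) ℝ) (e' u v : Fin n → ℝ) : ℝ :=
  ∑ i, ∑ j, u i * hessNegLog p e' i j * v j

/-- The local norm `‖v‖_{e'} = ⟨v, v⟩_{e'}^{1/2}`. -/
noncomputable def localNorm {n : ℕ} (p : MvPolynomial (Fin n) ℝ) (e' v : Fin n → ℝ) : ℝ :=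
  Real.sqrt (localIP p e' v v)

/-- The closed quadratic cone `K_{e'}(α) = {x : ⟨e', x⟩_{e'} ≥ α ‖x‖_{e'}}`. -/
noncomputable def quadCone {n : ℕ} (p : MvPolynomial (Fin n) ℝ) (e' : Fin n → ℝ) (α : ℝ) :
    Set (Fin n → ℝ) :=
  {x | α * localNorm p e' x ≤ localIP p e' e' x}

/-- The hyperbolicity cone is regular: it contains no nonzero linear subspace. -/
def IsRegularCone {n : ℕ} (p : MvPolynomial (Fin n) ℝ) (e : Fin n → ℝ) : Prop :=
  ∀ W : Submodule ℝ (Fin n → ℝ), (W : Set (Fin n → ℝ)) ⊆ hypConeClosed p e → W = ⊥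

open Polynomial Filter Topology

section Algebra

variable {n d : ℕ} {p : MvPolynomial (Fin n) ℝ}

/-- A homogeneous polynomial evaluates homogeneously in every algebra. -/
theorem aeval_mul_of_isHomogeneous {A : Type*} [CommRing A] [Algebra ℝ A]
    (hp : p.IsHomogeneous d) (c : A) (v : Fin n → A) :
    MvPolynomial.aeval (fun i => c * v i) p = c ^ d * MvPolynomial.aeval v p := by
  simp only [MvPolynomial.aeval_def, MvPolynomial.eval₂_eq', Finset.mul_sum]
  refine Finset.sum_congr rfl fun m hm => ?_
  have hdeg : ∑ i, m i = d := by
    have := hp (MvPolynomial.mem_support_iff.mp hm)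
    rw [← this, Finsupp.weight_apply, Finsupp.sum_fintype _ _ (by simp)]
    simp
  simp only [mul_pow, Finset.prod_mul_distrib, Finset.prod_pow_eq_pow_sum, hdeg]
  ring

/-- The restriction of a homogeneous polynomial of degree `d` to the line `t ↦ a + t b` has degree
at most `d`, and its coefficient of degree `d` is the value at `b`. -/
theorem natDegree_coeff_aeval_line {A : Type*} [CommRing A] [Algebra ℝ A]
    (hp : p.IsHomogeneous d) (a b : Fin n → A) :
    (MvPolynomial.aeval (fun i => C (a i) + C (b i) * X) p : A[X]).natDegree ≤ d ∧
      (MvPolynomial.aeval (fun i => C (a i) + C (b i) * X) p : A[X]).coeff d =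
        MvPolynomial.aeval b p := by
  have hlin : ∀ i, (C (a i) + C (b i) * X : A[X]).natDegree ≤ 1 := fun i => by compute_degree
  have hprod : ∀ (m : Fin n →₀ ℕ) (s : Finset (Fin n)),
      (∏ i ∈ s, (C (a i) + C (b i) * X : A[X]) ^ m i).natDegree ≤ ∑ i ∈ s, m i ∧
        (∏ i ∈ s, (C (a i) + C (b i) * X : A[X]) ^ m i).coeff (∑ i ∈ s, m i) =
          ∏ i ∈ s, b i ^ m i := by
    intro m s
    induction s using Finset.induction_on with
    | empty => simp
    | insert i s hi ih =>
      have h1 : ((C (a i) + C (b i) * X : A[X]) ^ m i).natDegree ≤ m i := by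
        simpa using natDegree_pow_le_of_le (m i) (hlin i)
      have h2 : ((C (a i) + C (b i) * X : A[X]) ^ m i).coeff (m i) = b i ^ m i := by
        simpa using coeff_pow_of_natDegree_le (hlin i) (m := m i)
      rw [Finset.prod_insert hi, Finset.sum_insert hi, Finset.prod_insert hi]
      exact ⟨natDegree_mul_le_of_le h1 ih.1, by
        rw [coeff_mul_add_eq_of_natDegree_le h1 ih.1, h2, ih.2]⟩
  have hdeg : ∀ m ∈ p.support, ∑ i, m i = d := by
    intro m hm
    have := hp (MvPolynomial.mem_support_iff.mp hm)
    rw [← this, Finsupp.weight_apply, Finsupp.sum_fintype _ _ (by simp)]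
    simp
  simp only [MvPolynomial.aeval_def, MvPolynomial.eval₂_eq', finsetSum_coeff]
  constructor
  · refine natDegree_sum_le_of_forall_le _ _ fun m hm => ?_
    rw [IsScalarTower.algebraMap_apply ℝ A A[X], ← hdeg m hm]
    exact (natDegree_C_mul_le _ _).trans (hprod m Finset.univ).1
  · refine Finset.sum_congr rfl fun m hm => ?_
    rw [IsScalarTower.algebraMap_apply ℝ A A[X], ← hdeg m hm]
    change (C _ * _).coeff _ = _
    rw [coeff_C_mul, (hprod m Finset.univ).2]

theorem eval_aeval_line {A : Type*} [CommRing A] [Algebra ℝ A] (a b : Fin n → A) (t : A) :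
    (MvPolynomial.aeval (fun i => C (a i) + C (b i) * X) p : A[X]).eval t =
      MvPolynomial.aeval (fun i => a i + t * b i) p := by
  simp only [MvPolynomial.aeval_def, MvPolynomial.eval₂_eq', eval_finsetSum, eval_mul,
    eval_prod, eval_pow, eval_add, eval_C, eval_X]
  refine Finset.sum_congr rfl fun m _ => ?_
  rw [IsScalarTower.algebraMap_apply ℝ A A[X]]
  change eval t (C _) * _ = _
  rw [eval_C]
  simp only [mul_comm t]

theorem hypCharPoly_eq_aeval_line (e x : Fin n → ℝ) :
    hypCharPoly p e x =
      MvPolynomial.aeval (fun i => C ((-x) i) + C (e i) * X) p := by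
  unfold hypCharPoly
  congr 1
  congr 1
  funext i
  simp only [Pi.neg_apply, C_neg]
  ring

theorem aeval_ofReal (x : Fin n → ℝ) :
    MvPolynomial.aeval (fun i => (x i : ℂ)) p = (MvPolynomial.eval x p : ℂ) := by
  simp only [MvPolynomial.aeval_def, MvPolynomial.eval₂_eq', MvPolynomial.eval_eq']
  push_cast
  rfl

theorem natDegree_hypCharPoly (hp : p.IsHomogeneous d) {e : Fin n → ℝ}
    (he : MvPolynomial.eval e p ≠ 0) (x : Fin n → ℝ) :
    (hypCharPoly p e x).natDegree = d ∧
      (hypCharPoly p e x).leadingCoeff = MvPolynomial.eval e p := by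
  have h := natDegree_coeff_aeval_line hp (-x) e
  rw [← hypCharPoly_eq_aeval_line, MvPolynomial.aeval_eq_eval] at h
  have h1 : (hypCharPoly p e x).natDegree = d :=
    natDegree_eq_of_le_of_coeff_ne_zero h.1 (by rw [h.2]; exact he)
  exact ⟨h1, by rw [leadingCoeff, h1, h.2]⟩

theorem eval_map_hypCharPoly (e x : Fin n → ℝ) (z : ℂ) :
    ((hypCharPoly p e x).map (algebraMap ℝ ℂ)).eval z =
      MvPolynomial.aeval (fun i => z * e i - x i) p := by
  unfold hypCharPoly
  simp only [MvPolynomial.aeval_def, MvPolynomial.eval₂_eq', Polynomial.map_sum,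
    Polynomial.map_mul, Polynomial.map_prod, Polynomial.map_pow, eval_finsetSum, eval_mul,
    eval_prod, eval_pow]
  refine Finset.sum_congr rfl fun m _ => ?_
  congr 1
  · rw [IsScalarTower.algebraMap_apply ℝ ℝ ℝ[X]]
    change eval z (Polynomial.map _ (C _)) = _
    rw [Polynomial.map_C, eval_C]
    rfl
  · refine Finset.prod_congr rfl fun i _ => ?_
    rw [Polynomial.map_sub, Polynomial.map_mul, Polynomial.map_C, Polynomial.map_X,
      Polynomial.map_C, eval_sub, eval_mul, eval_C, eval_X, eval_C, mul_comm]
    rfl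

theorem eval_hypCharPoly (e x : Fin n → ℝ) (t : ℝ) :
    (hypCharPoly p e x).eval t = MvPolynomial.eval (t • e - x) p := by
  rw [hypCharPoly_eq_aeval_line, eval_aeval_line, MvPolynomial.aeval_eq_eval]
  congr 2
  funext i
  simp; ring

/-- Factorization of `z ↦ p(z e - x)` over the hyperbolic eigenvalues of `x`. -/
theorem IsHyperbolicPoly.aeval_sub_eq_prod {e : Fin n → ℝ} (hp : IsHyperbolicPoly p e d)
    (x : Fin n → ℝ) (z : ℂ) :
    MvPolynomial.aeval (fun i => z * e i - x i) p =
      (MvPolynomial.eval e p : ℂ) *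
        ((hypCharPoly p e x).roots.map fun r : ℝ => z - (r : ℂ)).prod := by
  obtain ⟨h1, h2⟩ := natDegree_hypCharPoly hp.1 hp.2.1 x
  have h := C_leadingCoeff_mul_prod_multiset_X_sub_C (p := hypCharPoly p e x)
    (by rw [h1]; exact hp.2.2 x)
  rw [← eval_map_hypCharPoly]
  conv_lhs => rw [← h]
  rw [h2, Polynomial.map_mul, eval_mul, Polynomial.map_C, eval_C, Polynomial.map_multiset_prod,
    eval_multiset_prod]
  simp

theorem IsHyperbolicPoly.aeval_ne_zero {e : Fin n → ℝ} (hp : IsHyperbolicPoly p e d)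
    (x : Fin n → ℝ) {z : ℂ} (hz : z.im ≠ 0) :
    MvPolynomial.aeval (fun i => z * e i + x i) p ≠ 0 := by
  have h := hp.aeval_sub_eq_prod (-x) z
  simp only [Pi.neg_apply, Complex.ofReal_neg, sub_neg_eq_add] at h
  rw [h]
  refine mul_ne_zero (by exact_mod_cast hp.2.1) ?_
  rw [Ne, Multiset.prod_eq_zero_iff, Multiset.mem_map]
  rintro ⟨r, -, hr⟩
  exact hz (by have := congrArg Complex.im hr; simpa using this)

/-- A homogeneous polynomial without zeros over the upper half plane in direction `e` is
hyperbolic in direction `e`. -/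
theorem isHyperbolicPoly_of_aeval_ne_zero {e : Fin n → ℝ} (hp : p.IsHomogeneous d)
    (he : MvPolynomial.eval e p ≠ 0)
    (h : ∀ (x : Fin n → ℝ) (z : ℂ), 0 < z.im →
      MvPolynomial.aeval (fun i => z * e i + x i) p ≠ 0) :
    IsHyperbolicPoly p e d := by
  refine ⟨hp, he, fun x => ?_⟩
  obtain ⟨h1, h2⟩ := natDegree_hypCharPoly hp he x
  rw [← h1, ← splits_iff_card_roots]
  refine Splits.of_splits_map (algebraMap ℝ ℂ) (IsAlgClosed.splits _) fun z hz => ?_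
  have hz0 := (mem_roots'.mp hz).2
  rw [IsRoot, eval_map_hypCharPoly] at hz0
  have him : z.im = 0 := by
    rcases lt_trichotomy z.im 0 with hlt | heq | hgt
    · exfalso
      refine h x (-z) (by simpa using hlt) ?_
      have := aeval_mul_of_isHomogeneous hp (-1) (fun i => z * (e i : ℂ) - x i)
      rw [hz0, mul_zero] at this
      rw [← this]
      congr 2
      funext i
      ring
    · exact heq
    · exact absurd hz0 (by simpa [sub_eq_add_neg] using h (-x) z hgt)
  exact ⟨z.re, Complex.ext (by simp) (by simp [him])⟩

theorem mem_roots_hypCharPoly (hp : p.IsHomogeneous d) {e : Fin n → ℝ}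
    (he : MvPolynomial.eval e p ≠ 0) (x : Fin n → ℝ) (r : ℝ) :
    r ∈ (hypCharPoly p e x).roots ↔ MvPolynomial.eval (x + (-r) • e) p = 0 := by
  have h0 : hypCharPoly p e x ≠ 0 := by
    intro h
    have := (natDegree_hypCharPoly hp he x).2
    rw [h, leadingCoeff_zero] at this
    exact he this.symm
  rw [mem_roots h0, IsRoot, eval_hypCharPoly]
  have := aeval_mul_of_isHomogeneous hp (-1) (r • e - x)
  simp only [MvPolynomial.aeval_eq_eval] at this
  have h2 : (fun i => -1 * (r • e - x) i) = x + (-r) • e := by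
    funext i
    simp; ring
  rw [h2] at this
  change MvPolynomial.eval _ p = _ * MvPolynomial.eval _ p at this
  rw [this]
  simp

theorem mem_hypConeClosed_iff (hp : p.IsHomogeneous d) {e : Fin n → ℝ}
    (he : MvPolynomial.eval e p ≠ 0) (x : Fin n → ℝ) :
    x ∈ hypConeClosed p e ↔ ∀ t : ℝ, 0 < t → MvPolynomial.eval (x + t • e) p ≠ 0 := by
  simp only [hypConeClosed, Set.mem_ofPred_eq, mem_roots_hypCharPoly hp he]
  constructor
  · intro h t ht h0
    have := h (-t) (by simpa using h0)
    linarith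
  · intro h r hr
    by_contra! hneg
    exact h (-r) (by linarith) hr

theorem mem_hypConeOpen_iff (hp : p.IsHomogeneous d) {e : Fin n → ℝ}
    (he : MvPolynomial.eval e p ≠ 0) (x : Fin n → ℝ) :
    x ∈ hypConeOpen p e ↔ ∀ t : ℝ, 0 ≤ t → MvPolynomial.eval (x + t • e) p ≠ 0 := by
  simp only [hypConeOpen, Set.mem_ofPred_eq, mem_roots_hypCharPoly hp he]
  constructor
  · intro h t ht h0
    have := h (-t) (by simpa using h0)
    linarith
  · intro h r hr
    by_contra! hneg
    exact h (-r) (by linarith) hr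

end Algebra

section Garding

variable {n d : ℕ} {p : MvPolynomial (Fin n) ℝ}

theorem continuous_aeval_complex (p : MvPolynomial (Fin n) ℝ) :
    Continuous fun v : Fin n → ℂ => MvPolynomial.aeval v p := by
  simp only [MvPolynomial.aeval_def, MvPolynomial.eval₂_eq']
  fun_prop

/-- The roots of `t ↦ p(a + t b)` depend continuously on `a`. -/
theorem eventually_exists_root_near {S : Type*} [TopologicalSpace S] (hp : p.IsHomogeneous d)
    {b : Fin n → ℂ} (hb : MvPolynomial.aeval b p ≠ 0) {a : S → Fin n → ℂ} {s₀ : S}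
    (ha : ContinuousAt a s₀) {t₀ : ℂ}
    (h₀ : MvPolynomial.aeval (fun i => a s₀ i + t₀ * b i) p = 0) {ε : ℝ} (hε : 0 < ε) :
    ∀ᶠ s in 𝓝 s₀, ∃ t : ℂ, ‖t₀ - t‖ < ε ∧
      MvPolynomial.aeval (fun i => a s i + t * b i) p = 0 := by
  have hcont : ContinuousAt (fun s => MvPolynomial.aeval (fun i => a s i + t₀ * b i) p) s₀ := by
    refine (continuous_aeval_complex p).continuousAt.comp (f := fun s i => a s i + t₀ * b i) ?_
    rw [continuousAt_pi] at ha ⊢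
    exact fun i => (ha i).add continuousAt_const
  have hpos : 0 < ‖MvPolynomial.aeval b p‖ * ε ^ d := by positivity
  have hev := (Metric.continuousAt_iff'.mp hcont) _ hpos
  filter_upwards [hev] with s hs
  rw [h₀, dist_zero_right] at hs
  by_contra! hfar
  refine absurd hs (not_lt.mpr ?_)
  set q : ℂ[X] := MvPolynomial.aeval (fun i => C (a s i) + C (b i) * X) p with hq
  obtain ⟨h1, h2⟩ := natDegree_coeff_aeval_line hp (a s) b
  have hdeg : q.natDegree = d := natDegree_eq_of_le_of_coeff_ne_zero h1 (by rw [h2]; exact hb)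
  have hsplit : q.Splits := IsAlgClosed.splits q
  rw [← eval_aeval_line, ← hq, hsplit.eval_eq_prod_roots, norm_mul, leadingCoeff, hdeg, h2]
  refine mul_le_mul_of_nonneg_left ?_ (norm_nonneg _)
  have hcard : Multiset.card q.roots = d := by rw [← hsplit.natDegree_eq_card_roots, hdeg]
  have hroot : ∀ r ∈ q.roots, ε ≤ ‖t₀ - r‖ := by
    intro r hr
    by_contra! hlt
    refine hfar r hlt ?_
    rw [← eval_aeval_line]
    exact (mem_roots'.mp hr).2
  rw [← hcard]
  clear hcard
  generalize q.roots = m at hroot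
  induction m using Multiset.induction_on with
  | empty => simp
  | cons r m ih =>
    rw [Multiset.map_cons, Multiset.prod_cons, Multiset.card_cons, pow_succ', norm_mul]
    exact mul_le_mul (hroot r (Multiset.mem_cons_self _ _))
      (ih fun r hr => hroot r (Multiset.mem_cons_of_mem hr)) (by positivity) (norm_nonneg _)

/-- If the polynomials `t ↦ p(a(s) + t b)` never have a real root, the property of having no root
in the closed upper half plane does not depend on the parameter `s`. -/
theorem aeval_line_ne_zero_of_preconnected {S : Type*} [TopologicalSpace S] [PreconnectedSpace S]
    (hp : p.IsHomogeneous d) {b : Fin n → ℂ} (hb : MvPolynomial.aeval b p ≠ 0)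
    {a : S → Fin n → ℂ} (ha : Continuous a)
    (hreal : ∀ s (t : ℝ), MvPolynomial.aeval (fun i => a s i + t * b i) p ≠ 0) {s₀ : S}
    (h₀ : ∀ t : ℂ, 0 ≤ t.im → MvPolynomial.aeval (fun i => a s₀ i + t * b i) p ≠ 0)
    (s : S) {t : ℂ} (ht : 0 ≤ t.im) : MvPolynomial.aeval (fun i => a s i + t * b i) p ≠ 0 := by
  let B : Set S := {s | ∃ t : ℂ, 0 ≤ t.im ∧ MvPolynomial.aeval (fun i => a s i + t * b i) p = 0}
  have hopen : IsOpen B := by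
    rw [isOpen_iff_mem_nhds]
    rintro s ⟨t, ht, hroot⟩
    have hpos : 0 < t.im := by
      refine lt_of_le_of_ne ht fun h => hreal s t.re ?_
      rwa [show ((t.re : ℝ) : ℂ) = t from Complex.ext (by simp) (by simp [← h])]
    filter_upwards [eventually_exists_root_near hp hb ha.continuousAt hroot hpos]
    rintro s' ⟨t', hclose, hroot'⟩
    refine ⟨t', ?_, hroot'⟩
    have h1 := (le_abs_self _).trans (Complex.abs_im_le_norm (t - t'))
    rw [Complex.sub_im] at h1
    linarith
  have hclosed : IsClosed B := by
    rw [isClosed_iff_ultrafilter]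
    intro s u hu hB
    have hjoint : Continuous fun q : S × ℂ =>
        MvPolynomial.aeval (fun i => b i + q.2 * a q.1 i) p := by
      refine (continuous_aeval_complex p).comp (f := fun (q : S × ℂ) i => b i + q.2 * a q.1 i) ?_
      fun_prop
    have hne : ∀ᶠ q : S × ℂ in 𝓝 s ×ˢ 𝓝 0,
        MvPolynomial.aeval (fun i => b i + q.2 * a q.1 i) p ≠ 0 := by
      rw [← nhds_prod_eq]
      exact hjoint.continuousAt.eventually_ne (by simpa using hb)
    obtain ⟨P, hP, Q, hQ, hPQ⟩ := eventually_prod_iff.mp hne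
    obtain ⟨δ, hδ, hball⟩ := Metric.eventually_nhds_iff.mp hQ
    choose! f hf using fun (s : S) (hs : s ∈ B) => hs
    have hbound : ∀ᶠ s in (u : Filter S), f s ∈ Metric.closedBall (0 : ℂ) δ⁻¹ := by
      filter_upwards [hu hP, hB] with s' hPs hBs
      by_contra hout
      rw [mem_closedBall_zero_iff, not_le] at hout
      have hfne : f s' ≠ 0 := by
        intro h
        rw [h, norm_zero] at hout
        exact absurd hout (not_lt.mpr (by positivity))
      refine hPQ hPs (hball (y := (f s')⁻¹) ?_) ?_
      · rw [dist_zero_right, norm_inv]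
        exact inv_lt_of_inv_lt₀ hδ hout
      · have := aeval_mul_of_isHomogeneous hp (f s')⁻¹ fun i => a s' i + f s' * b i
        rw [(hf s' hBs).2, mul_zero] at this
        rw [← this]
        congr 2
        funext i
        field_simp
        ring
    obtain ⟨t, -, ht⟩ := (isCompact_closedBall (0 : ℂ) δ⁻¹).ultrafilter_le_nhds (u.map f)
      (le_principal_iff.mpr hbound)
    have htend : Tendsto f u (𝓝 t) := ht
    refine ⟨t, ?_, ?_⟩
    · refine ge_of_tendsto ((Complex.continuous_im.tendsto t).comp htend) ?_
      filter_upwards [hB] with s' hs'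
      exact (hf s' hs').1
    · have hcont : Continuous fun q : S × ℂ =>
          MvPolynomial.aeval (fun i => a q.1 i + q.2 * b i) p := by
        refine (continuous_aeval_complex p).comp
          (f := fun (q : S × ℂ) i => a q.1 i + q.2 * b i) ?_
        fun_prop
      have h1 : Tendsto (fun s' => (s', f s')) (u : Filter S) (𝓝 (s, t)) := by
        rw [nhds_prod_eq]
        exact Tendsto.prodMk hu htend
      refine tendsto_nhds_unique ((hcont.tendsto (s, t)).comp h1) ?_
      refine tendsto_const_nhds.congr' ?_
      filter_upwards [hB] with s' hs'
      exact (hf s' hs').2.symm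
  intro hzero
  have huniv : B = Set.univ := IsClopen.eq_univ ⟨hclosed, hopen⟩ ⟨s, t, ht, hzero⟩
  obtain ⟨t', ht', hroot⟩ : s₀ ∈ B := huniv ▸ Set.mem_univ s₀
  exact h₀ t' ht' hroot

theorem eval_ne_zero_of_mem_hypConeOpen {e e' : Fin n → ℝ} (hp : p.IsHomogeneous d)
    (he : MvPolynomial.eval e p ≠ 0) (he' : e' ∈ hypConeOpen p e) :
    MvPolynomial.eval e' p ≠ 0 := by
  simpa using (mem_hypConeOpen_iff hp he e').mp he' 0 le_rfl

theorem IsHyperbolicPoly.aeval_two_ne_zero {e e' : Fin n → ℝ} (hp : IsHyperbolicPoly p e d)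
    (he' : e' ∈ hypConeOpen p e) (y : Fin n → ℝ) {z w : ℂ} (hz : 0 < z.im) (hw : 0 ≤ w.im) :
    MvPolynomial.aeval (fun i => z * e i + w * e' i + y i) p ≠ 0 := by
  have he'0 := eval_ne_zero_of_mem_hypConeOpen hp.1 hp.2.1 he'
  have key := aeval_line_ne_zero_of_preconnected (S := ℝ) hp.1 (b := fun i => (e' i : ℂ))
    (by rw [aeval_ofReal]; exact_mod_cast he'0)
    (a := fun s i => z * e i + s * y i) (by fun_prop) ?_ (s₀ := 0) ?_ 1 hw
  · convert key using 3
    funext i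
    push_cast
    ring
  · intro s t
    convert hp.aeval_ne_zero (fun i => s * y i + t * e' i) hz.ne' using 3
    funext i
    push_cast
    ring
  · intro t ht hroot
    have hz0 : z ≠ 0 := fun h => by simp [h] at hz
    have h1 := hp.aeval_sub_eq_prod e' (-t / z)⁻¹
    by_cases ht0 : t = 0
    · have := aeval_mul_of_isHomogeneous hp.1 z fun i => (e i : ℂ)
      rw [aeval_ofReal] at this
      simp only [ht0, Complex.ofReal_zero, zero_mul, add_zero] at hroot
      rw [this] at hroot
      exact mul_ne_zero (pow_ne_zero _ hz0) (by exact_mod_cast hp.2.1) hroot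
    have h2 := aeval_mul_of_isHomogeneous hp.1 (-t⁻¹) fun i => z * (e i : ℂ) + t * e' i
    simp only [Complex.ofReal_zero, zero_mul, add_zero] at hroot
    rw [hroot, mul_zero] at h2
    have h3 : (fun i => (-t / z)⁻¹ * (e i : ℂ) - e' i) =
        fun i => -t⁻¹ * (z * (e i : ℂ) + t * e' i) := by
      funext i
      field_simp
      ring
    rw [h3, h2, eq_comm, mul_eq_zero, Multiset.prod_eq_zero_iff, Multiset.mem_map] at h1
    rcases h1 with h1 | ⟨r, hr, hr0⟩
    · exact hp.2.1 (by exact_mod_cast h1)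
    · have hrpos : 0 < r := he' r hr
      have h4 : z = -(r * t) := by
        rw [sub_eq_zero] at hr0
        field_simp at hr0
        linear_combination (-1 : ℂ) * hr0
      rw [h4] at hz
      simp only [Complex.neg_im, Complex.mul_im, Complex.ofReal_re, Complex.ofReal_im,
        zero_mul, add_zero] at hz
      nlinarith [mul_nonneg hrpos.le ht]

/-- Gårding: a hyperbolic polynomial is hyperbolic in every direction of its open cone. -/
theorem IsHyperbolicPoly.of_mem_hypConeOpen {e e' : Fin n → ℝ} (hp : IsHyperbolicPoly p e d)
    (he' : e' ∈ hypConeOpen p e) : IsHyperbolicPoly p e' d := by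
  have he'0 := eval_ne_zero_of_mem_hypConeOpen hp.1 hp.2.1 he'
  refine isHyperbolicPoly_of_aeval_ne_zero hp.1 he'0 fun x z hz hroot => ?_
  have hev := eventually_exists_root_near (S := ℝ) hp.1 (b := fun i => (e' i : ℂ))
    (by rw [aeval_ofReal]; exact_mod_cast he'0) (s₀ := 0) (t₀ := z)
    (a := fun s i => (s * Complex.I) * e i + x i) (by fun_prop)
    (by rw [← hroot]; congr 2; funext i; push_cast; ring) hz
  have hev' : ∀ᶠ s in 𝓝[>] (0 : ℝ), _ := hev.filter_mono nhdsWithin_le_nhds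
  obtain ⟨s, ⟨t, hclose, ht⟩, hs⟩ := (hev'.and self_mem_nhdsWithin).exists
  have h1 := (le_abs_self _).trans (Complex.abs_im_le_norm (z - t))
  rw [Complex.sub_im] at h1
  refine hp.aeval_two_ne_zero he' x (z := s * Complex.I) (w := t)
    (by simpa using hs) (by linarith) ?_
  rw [← ht]
  congr 2
  funext i
  ring

theorem IsHyperbolicPoly.aeval_three_ne_zero {e e' x : Fin n → ℝ} (hp : IsHyperbolicPoly p e d)
    (he' : e' ∈ hypConeOpen p e) (hx : x ∈ hypConeOpen p e) {z w v : ℂ} (hz : 0 < z.im)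
    (hw : 0 ≤ w.im) (hv : 0 ≤ v.im) :
    MvPolynomial.aeval (fun i => z * e i + v * x i + w * e' i) p ≠ 0 := by
  have he'0 := eval_ne_zero_of_mem_hypConeOpen hp.1 hp.2.1 he'
  have : PreconnectedSpace {v : ℂ // 0 ≤ v.im} :=
    Subtype.preconnectedSpace (convex_halfSpace_im_ge 0).isPreconnected
  refine aeval_line_ne_zero_of_preconnected (S := {v : ℂ // 0 ≤ v.im}) hp.1
    (b := fun i => (e' i : ℂ)) (by rw [aeval_ofReal]; exact_mod_cast he'0)
    (a := fun v i => z * e i + v * x i) (by fun_prop) ?_ (s₀ := ⟨0, le_rfl⟩) ?_ ⟨v, hv⟩ hw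
  · intro v t
    convert hp.aeval_two_ne_zero hx (fun i => t * e' i) hz v.2 using 3
    funext i
    push_cast
    ring
  · intro t ht
    convert hp.aeval_two_ne_zero he' 0 hz ht using 3
    funext i
    simp

theorem IsHyperbolicPoly.hypConeClosed_subset {e e' : Fin n → ℝ} (hp : IsHyperbolicPoly p e d)
    (he' : e' ∈ hypConeOpen p e) : hypConeClosed p e ⊆ hypConeClosed p e' := by
  have he'0 := eval_ne_zero_of_mem_hypConeOpen hp.1 hp.2.1 he'
  intro x hx
  rw [mem_hypConeClosed_iff hp.1 hp.2.1] at hx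
  rw [mem_hypConeClosed_iff hp.1 he'0]
  intro t ht h0
  obtain ⟨c, hc, hce⟩ : ∃ c : ℝ, 0 < c ∧ e' - c • e ∈ hypConeOpen p e := by
    have hcont : Continuous fun s : ℝ => MvPolynomial.eval (e' + s • e) p :=
      p.continuous_eval.comp (by fun_prop)
    have hne : ∀ᶠ s in 𝓝 (0 : ℝ), MvPolynomial.eval (e' + s • e) p ≠ 0 :=
      hcont.continuousAt.eventually_ne (by simpa using he'0)
    obtain ⟨δ, hδ, hball⟩ := Metric.eventually_nhds_iff.mp hne
    refine ⟨δ / 2, by positivity, ?_⟩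
    rw [mem_hypConeOpen_iff hp.1 hp.2.1] at he' ⊢
    intro s hs
    have h1 : e' - (δ / 2) • e + s • e = e' + (s - δ / 2) • e := by module
    rw [h1]
    rcases le_or_gt 0 (s - δ / 2) with h | h
    · exact he' _ h
    · refine hball ?_
      rw [Real.dist_eq, sub_zero, abs_of_neg h]
      linarith
  have htc : 0 < t * c / 2 := by positivity
  have hxe : x + (t * c / 2) • e ∈ hypConeOpen p e := by
    rw [mem_hypConeOpen_iff hp.1 hp.2.1]
    intro s hs
    rw [add_assoc, ← add_smul]
    exact hx _ (by linarith)
  refine hp.aeval_three_ne_zero hce hxe (z := Complex.I * (t * c / 2 : ℝ)) (w := Complex.I * t)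
    (v := Complex.I) (by simpa using htc) (by simpa using ht.le) (by simp) ?_
  have h1 := aeval_mul_of_isHomogeneous hp.1 Complex.I fun i => (((x + t • e') i : ℝ) : ℂ)
  rw [aeval_ofReal, h0, Complex.ofReal_zero, mul_zero] at h1
  rw [← h1]
  congr 2
  funext i
  simp only [Pi.add_apply, Pi.sub_apply, Pi.smul_apply, smul_eq_mul]
  push_cast
  ring

theorem IsHyperbolicPoly.mem_hypConeOpen_symm {e e' : Fin n → ℝ} (hp : IsHyperbolicPoly p e d)
    (he' : e' ∈ hypConeOpen p e) : e ∈ hypConeOpen p e' := by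
  have he'0 := eval_ne_zero_of_mem_hypConeOpen hp.1 hp.2.1 he'
  rw [mem_hypConeOpen_iff hp.1 hp.2.1] at he'
  rw [mem_hypConeOpen_iff hp.1 he'0]
  intro t ht h0
  rcases ht.eq_or_lt with rfl | ht
  · exact hp.2.1 (by simpa using h0)
  · refine he' t⁻¹ (by positivity) ?_
    have h1 := aeval_mul_of_isHomogeneous hp.1 t⁻¹ (e + t • e')
    simp only [MvPolynomial.aeval_eq_eval] at h1
    rw [h0, mul_zero] at h1
    rw [← h1]
    congr 2
    funext i
    simp only [Pi.add_apply, Pi.smul_apply, smul_eq_mul]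
    field_simp
    ring

/-- All directions in the open hyperbolicity cone define the same closed cone. -/
theorem IsHyperbolicPoly.hypConeClosed_eq {e e' : Fin n → ℝ} (hp : IsHyperbolicPoly p e d)
    (he' : e' ∈ hypConeOpen p e) : hypConeClosed p e = hypConeClosed p e' :=
  (hp.hypConeClosed_subset he').antisymm
    ((hp.of_mem_hypConeOpen he').hypConeClosed_subset (hp.mem_hypConeOpen_symm he'))

end Garding

section LocalGeometry

variable {n d : ℕ} {p : MvPolynomial (Fin n) ℝ}

theorem derivative_aeval_line (q : MvPolynomial (Fin n) ℝ) (a b : Fin n → ℝ) :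
    derivative (MvPolynomial.aeval (fun i => C (a i) + C (b i) * X) q : ℝ[X]) =
      ∑ j, C (b j) *
        MvPolynomial.aeval (fun i => C (a i) + C (b i) * X) (MvPolynomial.pderiv j q) := by
  induction q using MvPolynomial.induction_on with
  | C r => simp
  | add q₁ q₂ h₁ h₂ => simp only [map_add, h₁, h₂, mul_add, Finset.sum_add_distrib]
  | mul_X q i h =>
    classical
    have hlin : derivative (C (a i) + C (b i) * X : ℝ[X]) = C (b i) := by simp
    have hpderiv : ∀ j, C (b j) * MvPolynomial.aeval (fun i => C (a i) + C (b i) * X)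
        (MvPolynomial.pderiv j (q * MvPolynomial.X i)) =
          C (b j) * MvPolynomial.aeval (fun i => C (a i) + C (b i) * X)
            (MvPolynomial.pderiv j q) * (C (a i) + C (b i) * X) +
          if i = j then MvPolynomial.aeval (fun i => C (a i) + C (b i) * X) q * C (b j)
            else 0 := by
      intro j
      rw [Derivation.leibniz, MvPolynomial.pderiv_X, smul_eq_mul, smul_eq_mul, map_add, map_mul,
        map_mul, MvPolynomial.aeval_X]
      split_ifs with hij
      · subst hij
        rw [Pi.single_eq_same, map_one]
        ring
      · rw [Pi.single_eq_of_ne hij, map_zero]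
        ring
    rw [Finset.sum_congr rfl fun j _ => hpderiv j, Finset.sum_add_distrib, ← Finset.sum_mul,
      Finset.sum_ite_eq, if_pos (Finset.mem_univ _), ← h, map_mul, MvPolynomial.aeval_X,
      derivative_mul, hlin]

theorem eval_zero_derivatives_prod (m : Multiset ℝ) :
    ((m.map fun r => (1 + C r * X : ℝ[X])).prod).eval 0 = 1 ∧
      (derivative (m.map fun r => (1 + C r * X : ℝ[X])).prod).eval 0 = m.sum ∧
      (derivative (derivative (m.map fun r => (1 + C r * X : ℝ[X])).prod)).eval 0 =
        m.sum ^ 2 - (m.map fun r => r ^ 2).sum := by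
  induction m using Multiset.induction_on with
  | empty => simp
  | cons r m ih =>
    obtain ⟨h0, h1, h2⟩ := ih
    simp only [Multiset.map_cons, Multiset.prod_cons, Multiset.sum_cons]
    refine ⟨by simp [h0], by simp [h0, h1], ?_⟩
    simp [h1, h2]
    ring

theorem IsHyperbolicPoly.aeval_line_eq_prod {e : Fin n → ℝ} (hp : IsHyperbolicPoly p e d)
    (x : Fin n → ℝ) :
    (MvPolynomial.aeval (fun i => C (e i) + C (x i) * X) p : ℝ[X]) =
      C (MvPolynomial.eval e p) *
        ((hypCharPoly p e x).roots.map fun r => (1 + C r * X : ℝ[X])).prod := by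
  refine Polynomial.funext fun s => ?_
  rw [eval_aeval_line, eval_mul, eval_C, eval_multiset_prod, Multiset.map_map]
  simp only [Function.comp_apply, eval_add, eval_one, eval_mul, eval_C, eval_X]
  by_cases hs : s = 0
  · simp [hs]
  have h1 := hp.aeval_sub_eq_prod x ((-s⁻¹ : ℝ) : ℂ)
  have h2 : (fun i => ((-s⁻¹ : ℝ) : ℂ) * e i - x i) =
      fun i => (((-s⁻¹) • e - x) i : ℂ) := by
    funext i
    simp
  have h3 : ((hypCharPoly p e x).roots.map fun r : ℝ => ((-s⁻¹ : ℝ) : ℂ) - (r : ℂ)).prod =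
      (((hypCharPoly p e x).roots.map fun r : ℝ => -s⁻¹ - r).prod : ℝ) := by
    rw [← Complex.ofRealHom_eq_coe (Multiset.prod _), map_multiset_prod, Multiset.map_map]
    simp
  rw [h2, aeval_ofReal, h3] at h1
  have h4 : MvPolynomial.eval ((-s⁻¹) • e - x) p =
      MvPolynomial.eval e p * ((hypCharPoly p e x).roots.map fun r : ℝ => -s⁻¹ - r).prod := by
    exact_mod_cast h1
  have h5 := aeval_mul_of_isHomogeneous hp.1 (-s) ((-s⁻¹) • e - x)
  simp only [MvPolynomial.aeval_eq_eval] at h5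
  have h6 : (fun i => -s * ((-s⁻¹) • e - x) i) = fun i => e i + s * x i := by
    funext i
    simp only [Pi.sub_apply, Pi.smul_apply, smul_eq_mul]
    field_simp
    ring
  rw [h6, h4] at h5
  have h7 : (-s) ^ d * ((hypCharPoly p e x).roots.map fun r : ℝ => -s⁻¹ - r).prod =
      ((hypCharPoly p e x).roots.map fun r : ℝ => 1 + r * s).prod := by
    rw [← hp.2.2 x, ← Multiset.prod_replicate, ← Multiset.map_const', ← Multiset.prod_map_mul]
    congr 1
    refine Multiset.map_congr rfl fun r _ => ?_
    field_simp
    ring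
  rw [MvPolynomial.aeval_eq_eval]
  refine h5.trans ?_
  rw [← h7]
  ring

/-- The first and second directional derivatives of a hyperbolic polynomial in terms of the
hyperbolic eigenvalues. -/
theorem IsHyperbolicPoly.directional_derivatives {e : Fin n → ℝ} (hp : IsHyperbolicPoly p e d)
    (x : Fin n → ℝ) :
    (∑ j, x j * MvPolynomial.eval e (MvPolynomial.pderiv j p)) =
        MvPolynomial.eval e p * (hypCharPoly p e x).roots.sum ∧
      (∑ j, x j * ∑ i, x i *
          MvPolynomial.eval e (MvPolynomial.pderiv i (MvPolynomial.pderiv j p))) =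
        MvPolynomial.eval e p * ((hypCharPoly p e x).roots.sum ^ 2 -
          ((hypCharPoly p e x).roots.map fun r => r ^ 2).sum) := by
  obtain ⟨-, h1, h2⟩ := eval_zero_derivatives_prod (hypCharPoly p e x).roots
  have hline := hp.aeval_line_eq_prod x
  have hd1 := congrArg derivative hline
  have hd2 := congrArg derivative hd1
  have he1 := congrArg (eval 0) hd1
  have he2 := congrArg (eval 0) hd2
  rw [derivative_C_mul, eval_C_mul, h1] at he1
  rw [derivative_C_mul, derivative_C_mul, eval_C_mul, h2] at he2
  rw [← he1, ← he2]
  constructor <;>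
  · simp only [derivative_aeval_line, derivative_sum, derivative_C_mul, eval_finsetSum, eval_C_mul,
      eval_aeval_line, zero_mul, add_zero, MvPolynomial.aeval_eq_eval]

theorem sum_mul_eval_pderiv (hp : p.IsHomogeneous d) (e : Fin n → ℝ) :
    ∑ i, e i * MvPolynomial.eval e (MvPolynomial.pderiv i p) = d * MvPolynomial.eval e p := by
  have := congrArg (MvPolynomial.eval e) hp.sum_X_mul_pderiv
  simpa using this

theorem IsHyperbolicPoly.localIP_self {e : Fin n → ℝ} (hp : IsHyperbolicPoly p e d)
    (x : Fin n → ℝ) :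
    localIP p e x x = ((hypCharPoly p e x).roots.map fun r => r ^ 2).sum := by
  obtain ⟨h1, h2⟩ := hp.directional_derivatives x
  have he := hp.2.1
  have h3 : localIP p e x x =
      (∑ j, x j * MvPolynomial.eval e (MvPolynomial.pderiv j p)) ^ 2 / MvPolynomial.eval e p ^ 2 -
      (∑ j, x j * ∑ i, x i *
        MvPolynomial.eval e (MvPolynomial.pderiv i (MvPolynomial.pderiv j p))) /
          MvPolynomial.eval e p := by
    rw [localIP, Finset.sum_comm, sq, Finset.sum_mul_sum, Finset.sum_div, Finset.sum_div,
      ← Finset.sum_sub_distrib]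
    refine Finset.sum_congr rfl fun j _ => ?_
    rw [Finset.sum_div, Finset.mul_sum, Finset.sum_div, ← Finset.sum_sub_distrib]
    refine Finset.sum_congr rfl fun i _ => ?_
    rw [hessNegLog, Matrix.of_apply]
    ring
  rw [h3, h1, h2]
  field_simp
  ring

theorem IsHyperbolicPoly.localIP_direction (hd : 1 ≤ d) {e : Fin n → ℝ}
    (hp : IsHyperbolicPoly p e d) (x : Fin n → ℝ) :
    localIP p e e x = (hypCharPoly p e x).roots.sum := by
  obtain ⟨h1, -⟩ := hp.directional_derivatives x
  have he := hp.2.1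
  have hsecond : ∀ j, ∑ i, e i *
      MvPolynomial.eval e (MvPolynomial.pderiv i (MvPolynomial.pderiv j p)) =
        ((d : ℝ) - 1) * MvPolynomial.eval e (MvPolynomial.pderiv j p) := by
    intro j
    rw [sum_mul_eval_pderiv hp.1.pderiv e, Nat.cast_sub hd, Nat.cast_one]
  have h3 : localIP p e e x = ∑ j, x j * (MvPolynomial.eval e (MvPolynomial.pderiv j p) *
      (∑ i, e i * MvPolynomial.eval e (MvPolynomial.pderiv i p)) / MvPolynomial.eval e p ^ 2 -
      (∑ i, e i * MvPolynomial.eval e (MvPolynomial.pderiv i (MvPolynomial.pderiv j p))) /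
        MvPolynomial.eval e p) := by
    rw [localIP, Finset.sum_comm]
    refine Finset.sum_congr rfl fun j _ => ?_
    rw [Finset.mul_sum, Finset.sum_div, Finset.sum_div, ← Finset.sum_sub_distrib, Finset.mul_sum]
    refine Finset.sum_congr rfl fun i _ => ?_
    rw [hessNegLog, Matrix.of_apply]
    ring
  rw [h3, ← mul_right_inj' he, ← h1, Finset.mul_sum]
  refine Finset.sum_congr rfl fun j _ => ?_
  rw [hsecond, sum_mul_eval_pderiv hp.1]
  field_simp
  ring

end LocalGeometry

section Multiset

theorem Multiset.sq_sum_le_card_mul_sum_sq (m : Multiset ℝ) :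
    m.sum ^ 2 ≤ Multiset.card m * (m.map fun r => r ^ 2).sum := by
  induction m using Multiset.induction_on with
  | empty => simp
  | cons r m ih =>
    rw [Multiset.map_cons, Multiset.sum_cons, Multiset.sum_cons, Multiset.card_cons]
    push_cast
    rcases Multiset.empty_or_exists_mem m with rfl | ⟨s, hs⟩
    · simp
    have hc : (0 : ℝ) < Multiset.card m := by
      exact_mod_cast Multiset.card_pos_iff_exists_mem.mpr ⟨s, hs⟩
    have hcross : 2 * r * m.sum ≤ Multiset.card m * r ^ 2 + (m.map fun r => r ^ 2).sum := by
      refine le_of_mul_le_mul_left ?_ hc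
      nlinarith [sq_nonneg (Multiset.card m * r - m.sum)]
    nlinarith

theorem Multiset.sum_sq_le_sq_sum (m : Multiset ℝ) (hm : ∀ r ∈ m, 0 ≤ r) :
    (m.map fun r => r ^ 2).sum ≤ m.sum ^ 2 := by
  induction m using Multiset.induction_on with
  | empty => simp
  | cons r m ih =>
    have h1 := ih fun r hr => hm r (Multiset.mem_cons_of_mem hr)
    have h2 : 0 ≤ m.sum := Multiset.sum_nonneg fun r hr => hm r (Multiset.mem_cons_of_mem hr)
    have h3 := hm r (Multiset.mem_cons_self _ _)
    rw [Multiset.map_cons, Multiset.sum_cons, Multiset.sum_cons]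
    nlinarith [mul_nonneg h2 h3]

/-- A list of `d` reals whose sum is at least `√(d-1)` times its Euclidean norm is nonnegative. -/
theorem Multiset.nonneg_of_sqrt_mul_norm_le_sum (m : Multiset ℝ)
    (hm : √((Multiset.card m : ℝ) - 1) * √(m.map fun r => r ^ 2).sum ≤ m.sum) :
    ∀ r ∈ m, 0 ≤ r := by
  intro r hr
  by_contra! hneg
  obtain ⟨m, rfl⟩ := Multiset.exists_cons_of_mem hr
  rw [Multiset.map_cons, Multiset.sum_cons, Multiset.sum_cons, Multiset.card_cons] at hm
  push_cast at hm
  rw [add_sub_cancel_right, ← Real.sqrt_mul (Nat.cast_nonneg _)] at hm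
  have h1 := m.sq_sum_le_card_mul_sum_sq
  have h2 : m.sum ≤ √(Multiset.card m * (r ^ 2 + (m.map fun r => r ^ 2).sum)) := by
    refine Real.le_sqrt_of_sq_le (h1.trans ?_)
    gcongr
    nlinarith [sq_nonneg r]
  linarith

end Multiset

/-- Proposition 8.9 in RS14.
For every `e' ∈ Λ₊₊`: `K_{e'}(√(d-1)) ⊆ Λ₊ ⊆ K_{e'}(1)`. -/
theorem stmt8 {n d : ℕ} (hd : 1 ≤ d) (p : MvPolynomial (Fin n) ℝ) (e : Fin n → ℝ)
    (hp : IsHyperbolicPoly p e d) (hpe : 0 < MvPolynomial.eval e p)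
    (hreg : IsRegularCone p e) :
    ∀ e' ∈ hypConeOpen p e,
      quadCone p e' (Real.sqrt ((d : ℝ) - 1)) ⊆ hypConeClosed p e ∧
      hypConeClosed p e ⊆ quadCone p e' 1 := by
  intro e' he'
  have hp' := hp.of_mem_hypConeOpen he'
  rw [hp.hypConeClosed_eq he']
  constructor
  · intro x hx
    refine Multiset.nonneg_of_sqrt_mul_norm_le_sum _ ?_
    rw [hp'.2.2 x, ← hp'.localIP_self, ← hp'.localIP_direction hd]
    exact hx
  · intro x hx
    change 1 * √(localIP p e' x x) ≤ localIP p e' e' x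
    rw [one_mul, hp'.localIP_self, hp'.localIP_direction hd]
    exact Real.sqrt_le_iff.mpr ⟨Multiset.sum_nonneg hx, Multiset.sum_sq_le_sq_sum _ hx⟩
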